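/- Define the (2ℓ+1)×(2ℓ+1) matrix-valued polynomial M(x) by M(x)_{k,n} = q^{(2k+1)(k-n)} (q²;q²)_k (q²;q²)_{k+n} / ((q²;q²)_{2k}(q²;q²)_n) · C_{k-n}(x;q^{-2k}|q²) for 0 ≤ n ≤ k ≤ 2ℓ and M(x)_{k,n} = 0 for n > k. Then M(x) is the inverse of L(x): L(x)·M(x) = I for every x. -/

import Mathlib

open Finset Polynomial MeasureTheory Matrix
open scoped BigOperators ComplexOrder

noncomputable section

/-- q-shifted factorial `(a;p)_n`. -/
def qp (a p : ℂ) (n : ℕ) : ℂ := ∏ j ∈ Finset.range n, (1 - a * p ^ j)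

/-- q-Racah polynomial `R_n(μ(x);α,β,γ,δ;p)`. -/
def qRacah (p α β γ δ : ℂ) (n x : ℕ) : ℂ :=
  ∑ k ∈ Finset.range (min n x + 1),
    qp (p ^ (-(n : ℤ))) p k * qp (α * β * p ^ (n + 1)) p k *
        qp (p ^ (-(x : ℤ))) p k * qp (γ * δ * p ^ (x + 1)) p k /
      (qp (α * p) p k * qp (β * δ * p) p k * qp (γ * p) p k * qp p p k) * p ^ k

/-- `IsUltra C` says that for each base `p`, parameter `β` and degree `n`, `C p β n` is
the continuous q-ultraspherical polynomial: it has degree at most `n` and its values at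
`(z+z⁻¹)/2` are given by the symmetric Laurent sum. -/
def IsUltra (C : ℂ → ℂ → ℕ → Polynomial ℂ) : Prop :=
  ∀ (p β : ℂ) (n : ℕ),
    (C p β n).degree ≤ (n : ℕ) ∧
      ∀ z : ℂ, z ≠ 0 →
        (C p β n).eval ((z + z⁻¹) / 2) =
          ∑ r ∈ Finset.range (n + 1),
            qp β p r * qp β p (n - r) / (qp p p r * qp p p (n - r)) * z ^ ((n : ℤ) - 2 * r)

/-- The matrix-valued polynomial `P_n` (entries in `Polynomial ℂ`); here `L = 2ℓ`. -/
def Pm (q : ℂ) (L : ℕ) (C : ℂ → ℂ → ℕ → Polynomial ℂ) (n : ℕ) :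
    Matrix (Fin (L + 1)) (Fin (L + 1)) (Polynomial ℂ) :=
  Matrix.of fun i j =>
    ∑ k ∈ Finset.Icc (i : ℕ) (min L (n + (j : ℕ))),
      Polynomial.C
          ((-1 : ℂ) ^ k *
            q ^ ((n : ℤ) + (2 * (k : ℤ) + 1) * ((k : ℤ) - ((i : ℕ) : ℤ)) +
                ((j : ℕ) : ℤ) * (2 * (k : ℤ) + 1) + 2 * (k : ℤ) * ((L : ℤ) + (n : ℤ) + 1) -
                (k : ℤ) ^ 2) *
            (qp (q ^ 2) (q ^ 2) k * qp (q ^ 2) (q ^ 2) (k + (i : ℕ)) /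
              (qp (q ^ 2) (q ^ 2) (2 * k) * qp (q ^ 2) (q ^ 2) (i : ℕ))) *
            (qp (q ^ (-(2 * (L : ℤ)))) (q ^ 2) k *
                qp (q ^ (-(2 * ((j : ℕ) : ℤ) + 2 * (n : ℤ)))) (q ^ 2) k /
              (qp (q ^ 2) (q ^ 2) k * qp (q ^ (2 * (L : ℤ) + 4)) (q ^ 2) k)) *
            (qp (q ^ 2) (q ^ 2) (n + (j : ℕ) - k) /
              qp (q ^ (4 * (k : ℤ) + 4)) (q ^ 2) (n + (j : ℕ) - k)) *
            qRacah (q ^ 2) 1 1 (q ^ (-(2 * (n : ℤ) + 2 * ((j : ℕ) : ℤ) + 2)))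
              (q ^ (-(2 * (L : ℤ) + 2))) k (j : ℕ)) *
        (C (q ^ 2) (q ^ (-(2 * (k : ℤ)))) (k - (i : ℕ)) *
          C (q ^ 2) (q ^ (2 * (k : ℤ) + 2)) (n + (j : ℕ) - k))

/-- Evaluation of the matrix-valued polynomial `P_n` at a point. -/
def evP (q : ℂ) (L : ℕ) (C : ℂ → ℂ → ℕ → Polynomial ℂ) (n : ℕ) (x : ℂ) :
    Matrix (Fin (L + 1)) (Fin (L + 1)) ℂ :=
  (Pm q L C n).map (Polynomial.eval x)

/-- The coefficients `α_t(m,n)` of the weight. -/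
def alphaC (q : ℂ) (L m n t : ℕ) : ℂ :=
  q ^ (2 * (n : ℤ) * ((L : ℤ) + 1) - (n : ℤ) ^ 2 - (2 * (L : ℤ) + 3) * (t : ℤ) + (t : ℤ) ^ 2 -
      (L : ℤ) + (m : ℤ)) *
    ((1 - q ^ (2 * (L : ℤ) + 2)) / (1 - q ^ (2 * (m : ℤ) + 2))) *
    (qp (q ^ 2) (q ^ 2) (L - n) * qp (q ^ 2) (q ^ 2) n / qp (q ^ 2) (q ^ 2) L) *
    ((-1 : ℂ) ^ ((m : ℤ) - (t : ℤ)) * qp (q ^ (2 * (m : ℤ) - 2 * (L : ℤ))) (q ^ 2) (n - t) /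
      qp (q ^ (2 * (m : ℤ) + 4)) (q ^ 2) (n - t)) *
    (qp (q ^ (2 * (L : ℤ) + 4 - 2 * (t : ℤ))) (q ^ 2) t / qp (q ^ 2) (q ^ 2) t)

/-- The matrix weight `W(x)`. -/
def Wm (q : ℂ) (L : ℕ) (x : ℂ) : Matrix (Fin (L + 1)) (Fin (L + 1)) ℂ :=
  Matrix.of fun i j =>
    ∑ t ∈ Finset.range (max (i : ℕ) (j : ℕ) + 1),
      alphaC q L (min (i : ℕ) (j : ℕ)) (max (i : ℕ) (j : ℕ)) t *
        (Polynomial.Chebyshev.U ℂ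
            ((min (i : ℕ) (j : ℕ) : ℤ) + (max (i : ℕ) (j : ℕ) : ℤ) - 2 * (t : ℤ))).eval x

/-- The antidiagonal involution `J`. -/
def Jm (L : ℕ) : Matrix (Fin (L + 1)) (Fin (L + 1)) ℂ :=
  Matrix.of fun i j => if (i : ℕ) + (j : ℕ) = L then 1 else 0

/-- The diagonal leading-coefficient matrix `Γ_n`. -/
def Gam (q : ℂ) (L n : ℕ) : Matrix (Fin (L + 1)) (Fin (L + 1)) ℂ :=
  Matrix.diagonal fun i =>
    2 ^ n * q ^ n * qp (q ^ (2 * ((i : ℕ) : ℤ) + 2)) (q ^ 2) n *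
        qp (q ^ (2 * (L : ℤ) - 2 * ((i : ℕ) : ℤ) + 2)) (q ^ 2) n /
      (qp (q ^ 2) (q ^ 2) n * qp (q ^ (2 * (L : ℤ) + 4)) (q ^ 2) n)

/-- The squared-norm matrix `G_m`. -/
def Gmat (q : ℂ) (L m : ℕ) : Matrix (Fin (L + 1)) (Fin (L + 1)) ℂ :=
  Matrix.diagonal fun i =>
    q ^ (2 * (m : ℤ) - (L : ℤ)) * (1 - q ^ (2 * (L : ℤ) + 2)) ^ 2 /
      ((1 - q ^ (2 * (m : ℤ) + 2 * ((i : ℕ) : ℤ) + 2)) *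
        (1 - q ^ (2 * (L : ℤ) - 2 * ((i : ℕ) : ℤ) + 2 * (m : ℤ) + 2)))

/-- The unipotent lower triangular matrix `L(x)` of the LDU decomposition. -/
def Lm (q : ℂ) (L : ℕ) (C : ℂ → ℂ → ℕ → Polynomial ℂ) (x : ℂ) :
    Matrix (Fin (L + 1)) (Fin (L + 1)) ℂ :=
  Matrix.of fun m k =>
    if (k : ℕ) ≤ (m : ℕ) then
      q ^ (((m : ℕ) : ℤ) - ((k : ℕ) : ℤ)) * qp (q ^ 2) (q ^ 2) (m : ℕ) *
          qp (q ^ 2) (q ^ 2) (2 * (k : ℕ) + 1) /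
          (qp (q ^ 2) (q ^ 2) ((m : ℕ) + (k : ℕ) + 1) * qp (q ^ 2) (q ^ 2) (k : ℕ)) *
        (C (q ^ 2) (q ^ (2 * (k : ℕ) + 2)) ((m : ℕ) - (k : ℕ))).eval x
    else 0

/-- The claimed inverse of `L(x)`. -/
def Linv (q : ℂ) (L : ℕ) (C : ℂ → ℂ → ℕ → Polynomial ℂ) (x : ℂ) :
    Matrix (Fin (L + 1)) (Fin (L + 1)) ℂ :=
  Matrix.of fun k n =>
    if (n : ℕ) ≤ (k : ℕ) then
      q ^ ((2 * ((k : ℕ) : ℤ) + 1) * (((k : ℕ) : ℤ) - ((n : ℕ) : ℤ))) *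
          qp (q ^ 2) (q ^ 2) (k : ℕ) * qp (q ^ 2) (q ^ 2) ((k : ℕ) + (n : ℕ)) /
          (qp (q ^ 2) (q ^ 2) (2 * (k : ℕ)) * qp (q ^ 2) (q ^ 2) (n : ℕ)) *
        (C (q ^ 2) (q ^ (-(2 * ((k : ℕ) : ℤ)))) ((k : ℕ) - (n : ℕ))).eval x
    else 0

/-- The constants `c_k(ℓ)`. -/
def ckC (q : ℂ) (L k : ℕ) : ℂ :=
  q ^ (-(L : ℤ)) / 4 * (1 - q ^ (4 * k + 2)) * qp (q ^ 2) (q ^ 2) (L + k + 1) *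
      qp (q ^ 2) (q ^ 2) (L - k) * qp (q ^ 2) (q ^ 2) k ^ 4 /
    (qp (q ^ 2) (q ^ 2) (2 * k + 1) ^ 2 * qp (q ^ 2) (q ^ 2) L ^ 2)

/-- The diagonal part `T(x)` of the LDU decomposition. -/
def Tm (q : ℂ) (L : ℕ) (x : ℂ) : Matrix (Fin (L + 1)) (Fin (L + 1)) ℂ :=
  Matrix.diagonal fun k =>
    ckC q L (k : ℕ) *
      (4 * ∏ j ∈ Finset.Icc 1 (k : ℕ), (1 - 2 * (2 * x ^ 2 - 1) * q ^ (2 * j) + q ^ (4 * j)))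

/-- The coefficient matrix `M₁(z)` of the q-difference operator `D₁`. -/
def M1f (q : ℂ) (L : ℕ) (z : ℂ) : Matrix (Fin (L + 1)) (Fin (L + 1)) ℂ :=
  Matrix.of fun i j =>
    if (j : ℕ) = (i : ℕ) + 1 then
      -(q ^ (1 - ((i : ℕ) : ℤ)) * (1 - q ^ (2 * (i : ℕ) + 2)) / (1 - q ^ 2) ^ 2 *
        (z / (1 - z ^ 2)))
    else if (j : ℕ) = (i : ℕ) then
      q ^ (1 - ((i : ℕ) : ℤ)) / (1 - q ^ 2) ^ 2 *
        ((1 - q ^ (2 * (i : ℕ) + 2) * z ^ 2) / (1 - z ^ 2))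
    else 0

/-- `M₂(z) = J M₁(z) J`. -/
def M2f (q : ℂ) (L : ℕ) (z : ℂ) : Matrix (Fin (L + 1)) (Fin (L + 1)) ℂ :=
  Jm L * M1f q L z * Jm L

/-- The eigenvalue matrix `Λ_n(1)`. -/
def Lam1 (q : ℂ) (L n : ℕ) : Matrix (Fin (L + 1)) (Fin (L + 1)) ℂ :=
  Matrix.diagonal fun j =>
    (q ^ (-((j : ℕ) : ℤ) - (n : ℤ) - 1) + q ^ (((j : ℕ) : ℤ) + (n : ℤ) + 1)) / (q⁻¹ - q) ^ 2

/-- The eigenvalue matrix `Λ_n(2) = J Λ_n(1) J`. -/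
def Lam2 (q : ℂ) (L n : ℕ) : Matrix (Fin (L + 1)) (Fin (L + 1)) ℂ :=
  Jm L * Lam1 q L n * Jm L

/-- The diagonal coefficient matrix `K₁(z)` of the decoupled operator. -/
def K1f (q : ℂ) (L : ℕ) (z : ℂ) : Matrix (Fin (L + 1)) (Fin (L + 1)) ℂ :=
  Matrix.diagonal fun i =>
    q ^ (1 - ((i : ℕ) : ℤ)) / (1 - q ^ 2) ^ 2 *
      ((1 - q ^ (2 * (i : ℕ) + 2) * z ^ 2) / (1 - z ^ 2))

/-- The symmetric Laurent polynomial `Ĉ_k(z;β|p)`. -/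
def Chat (p β : ℂ) (k : ℕ) (z : ℂ) : ℂ :=
  ∑ r ∈ Finset.range (k + 1),
    qp β p r * qp β p (k - r) / (qp p p r * qp p p (k - r)) * z ^ ((k : ℤ) - 2 * (r : ℤ))

/-- The matrix polynomials `R_n(x) = L(x)ᵀ P_n(x) Γ_n⁻¹`. -/
def Rmat (q : ℂ) (L : ℕ) (C : ℂ → ℂ → ℕ → Polynomial ℂ) (n : ℕ) (x : ℂ) :
    Matrix (Fin (L + 1)) (Fin (L + 1)) ℂ :=
  (Lm q L C x)ᵀ * evP q L C n x * (Gam q L n)⁻¹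


/-- one-variable q-binomial series -/
def Fs (p β : ℂ) : PowerSeries ℂ := PowerSeries.mk fun n => qp β p n / qp p p n

def Gs (p z β : ℂ) : PowerSeries ℂ :=
  PowerSeries.rescale z⁻¹ (Fs p β) * PowerSeries.rescale z (Fs p β)

def kap (z ω : ℂ) : PowerSeries ℂ :=
  (1 - PowerSeries.C (ω * z⁻¹) * PowerSeries.X) * (1 - PowerSeries.C (ω * z) * PowerSeries.X)

def Hs (p z : ℂ) (m : ℕ) : PowerSeries ℂ := ∏ j ∈ Finset.range m, kap z (p ^ j)

def Ds (p z w : ℂ) (M : ℕ) : PowerSeries ℂ :=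
  PowerSeries.mk fun j => qp (w ^ 2 * p ^ j) p M * PowerSeries.coeff j (Gs p z w)

lemma qp_succ (a p : ℂ) (n : ℕ) : qp a p (n + 1) = qp a p n * (1 - a * p ^ n) := by
  simp [qp, Finset.prod_range_succ]

lemma qp_succ' (a p : ℂ) (n : ℕ) : qp a p (n + 1) = (1 - a) * qp (a * p) p n := by
  simp only [qp, Finset.prod_range_succ', pow_zero, mul_one]
  rw [mul_comm]
  congr 1
  apply Finset.prod_congr rfl
  intro j _
  ring

lemma qp_add (a p : ℂ) (i j : ℕ) : qp a p (i + j) = qp a p i * qp (a * p ^ i) p j := by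
  simp only [qp, Finset.prod_range_add]
  congr 1
  apply Finset.prod_congr rfl
  intro j _
  ring

lemma Fs_rec (p β : ℂ) (hp : ∀ n, qp p p n ≠ 0) :
    (1 - PowerSeries.C β * PowerSeries.X) * Fs p (β * p) = Fs p β := by
  ext n
  rw [sub_mul, one_mul, mul_assoc, map_sub, PowerSeries.coeff_C_mul]
  cases n with
  | zero => simp [Fs, qp]
  | succ k =>
    rw [PowerSeries.coeff_succ_X_mul]
    simp only [Fs, PowerSeries.coeff_mk]
    rw [qp_succ' β p k]
    have h1 := hp k
    have h2 := hp (k + 1)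
    rw [qp_succ] at h2
    have h3 := (mul_ne_zero_iff.mp h2).2
    rw [qp_succ p p k, qp_succ (β * p) p k]
    field_simp
    ring

lemma Fs_one (p : ℂ) : Fs p 1 = 1 := by
  ext n
  cases n with
  | zero => simp [Fs, qp]
  | succ k => simp [Fs, qp_succ', PowerSeries.coeff_one]

lemma rescale_lin (a b : ℂ) : PowerSeries.rescale a (1 - PowerSeries.C b * PowerSeries.X) =
    1 - PowerSeries.C (b * a) * PowerSeries.X := by
  ext n
  rw [PowerSeries.coeff_rescale, map_sub, map_sub, PowerSeries.coeff_C_mul, PowerSeries.coeff_C_mul,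
    PowerSeries.coeff_one, PowerSeries.coeff_X]
  rcases n with _ | _ | n <;> simp
  ring

lemma Gs_rec (p z β : ℂ) (hp : ∀ n, qp p p n ≠ 0) :
    kap z β * Gs p z (β * p) = Gs p z β := by
  unfold Gs kap
  rw [← Fs_rec p β hp, map_mul (PowerSeries.rescale z), map_mul (PowerSeries.rescale z⁻¹),
    rescale_lin, rescale_lin]
  ring

lemma Gs_one (p z : ℂ) : Gs p z 1 = 1 := by simp [Gs, Fs_one]

lemma rescale_kap (z a ω : ℂ) : PowerSeries.rescale a (kap z ω) = kap z (ω * a) := by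
  unfold kap
  rw [map_mul, rescale_lin, rescale_lin]
  congr 4 <;> ring

lemma Hs_succ (p z : ℂ) (m : ℕ) : Hs p z (m + 1) = Hs p z m * kap z (p ^ m) := by
  simp [Hs, Finset.prod_range_succ]

lemma Hs_succ' (p z : ℂ) (m : ℕ) :
    Hs p z (m + 1) = kap z 1 * PowerSeries.rescale p (Hs p z m) := by
  simp only [Hs, Finset.prod_range_succ', map_prod, rescale_kap, pow_zero, ← pow_succ]
  rw [mul_comm]

lemma Hs_mul_Gs (p z : ℂ) (hp : ∀ n, qp p p n ≠ 0) (n : ℕ) :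
    Hs p z n * Gs p z (p ^ n) = 1 := by
  induction n with
  | zero => simp [Hs, Gs_one]
  | succ n ih => rw [Hs_succ, mul_assoc, pow_succ, Gs_rec p z _ hp, ih]

lemma Hs_eq (p z : ℂ) (hp : ∀ n, qp p p n ≠ 0) (hp0 : p ≠ 0) (m : ℕ) :
    Hs p z m = PowerSeries.rescale (p ^ m) (Gs p z (p ^ m)⁻¹) := by
  induction m with
  | zero => simp [Hs, Gs_one]
  | succ m ih =>
    have h : (p ^ (m + 1))⁻¹ * p = (p ^ m)⁻¹ := by field_simp; ring
    have h2 : (p ^ (m + 1))⁻¹ * p ^ (m + 1) = 1 := by field_simp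
    rw [Hs_succ', ih, ← Gs_rec p z (p ^ (m + 1))⁻¹ hp, map_mul, rescale_kap, h, h2,
      PowerSeries.rescale_rescale]
    congr 3
    try ring

lemma Ds_succ (p z w : ℂ) (M : ℕ) : Ds p z w (M + 1) =
    Ds p z w M - PowerSeries.C (w ^ 2 * p ^ M) * PowerSeries.rescale p (Ds p z w M) := by
  ext j
  rw [map_sub, PowerSeries.coeff_C_mul, PowerSeries.coeff_rescale]
  simp only [Ds, PowerSeries.coeff_mk, qp_succ]
  ring

def Es (p z : ℂ) (n M : ℕ) : PowerSeries ℂ := Hs p z (n + M) * Ds p z (p ^ n) M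

lemma Es_succ (p z : ℂ) (n M : ℕ) : Es p z n (M + 1) =
    kap z (p ^ (n + M)) * Es p z n M -
      PowerSeries.C ((p ^ n) ^ 2 * p ^ M) * (kap z 1 * PowerSeries.rescale p (Es p z n M)) := by
  unfold Es
  rw [Ds_succ, mul_sub, ← add_assoc, map_mul (PowerSeries.rescale p)]
  congr 1
  · rw [Hs_succ]; ring
  · rw [Hs_succ']; ring

lemma kap_expand (z ω : ℂ) (hz : z ≠ 0) : kap z ω = 1 - PowerSeries.C (ω * (z + z⁻¹)) * PowerSeries.X
    + PowerSeries.C (ω ^ 2) * PowerSeries.X ^ 2 := by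
  have : PowerSeries.C (ω ^ 2) = PowerSeries.C (ω * z⁻¹) * PowerSeries.C (ω * z) := by
    rw [← map_mul]; congr 1; field_simp
  rw [this]
  unfold kap
  simp only [map_mul, map_add]
  ring

lemma coeff_kap (z ω : ℂ) (hz : z ≠ 0) (A : PowerSeries ℂ) (N : ℕ) :
    PowerSeries.coeff (N + 2) (kap z ω * A) = PowerSeries.coeff (N + 2) A
      - ω * (z + z⁻¹) * PowerSeries.coeff (N + 1) A + ω ^ 2 * PowerSeries.coeff N A := by
  rw [kap_expand z ω hz, add_mul, sub_mul, one_mul, mul_assoc, mul_assoc, map_add, map_sub,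
    PowerSeries.coeff_C_mul, PowerSeries.coeff_C_mul, PowerSeries.coeff_succ_X_mul,
    PowerSeries.coeff_X_pow_mul]

lemma Es_deg (p z : ℂ) (hp : ∀ n, qp p p n ≠ 0) (hz : z ≠ 0) (n M : ℕ) :
    ∀ N, M < N → PowerSeries.coeff N (Es p z n M) = 0 := by
  induction M with
  | zero =>
    intro N hN
    have : Es p z n 0 = 1 := by
      have h : Ds p z (p ^ n) 0 = Gs p z (p ^ n) := by ext j; simp [Ds, qp]
      rw [Es, h, add_zero, Hs_mul_Gs p z hp]
    rw [this, PowerSeries.coeff_one, if_neg (by omega)]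
  | succ M ih =>
    intro N hN
    obtain ⟨N, rfl⟩ : ∃ K, N = K + 2 := ⟨N - 2, by omega⟩
    rw [Es_succ, map_sub, PowerSeries.coeff_C_mul, coeff_kap z _ hz, coeff_kap z _ hz]
    simp only [PowerSeries.coeff_rescale]
    rw [ih (N + 2) (by omega), ih (N + 1) (by omega)]
    rcases Nat.lt_or_ge M N with h | h
    · rw [ih N h]; ring
    · obtain rfl : N = M := by omega
      ring

lemma key (p z : ℂ) (hp : ∀ n, qp p p n ≠ 0) (hp0 : p ≠ 0) (hz : z ≠ 0) (n M : ℕ) :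
    ∑ j ∈ Finset.range (M + 2), qp ((p ^ n) ^ 2 * p ^ j) p M * PowerSeries.coeff j (Gs p z (p ^ n)) *
      ((p ^ (n + M)) ^ (M + 1 - j) *
        PowerSeries.coeff (M + 1 - j) (Gs p z (p ^ (n + M))⁻¹)) = 0 := by
  have h := Es_deg p z hp hz n M (M + 1) (by omega)
  rw [Es, mul_comm, PowerSeries.coeff_mul, Finset.Nat.sum_antidiagonal_eq_sum_range_succ_mk,
    Hs_eq p z hp hp0] at h
  simpa [Ds, PowerSeries.coeff_rescale] using h

lemma ultra_eval (C : ℂ → ℂ → ℕ → Polynomial ℂ) (hC : IsUltra C) (p β z : ℂ) (hz : z ≠ 0) (n : ℕ) :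
    (C p β n).eval ((z + z⁻¹) / 2) = PowerSeries.coeff n (Gs p z β) := by
  rw [(hC p β n).2 z hz, Gs, PowerSeries.coeff_mul, Finset.Nat.sum_antidiagonal_eq_sum_range_succ_mk]
  apply Finset.sum_congr rfl
  intro r hr
  have hr' : r ≤ n := by simpa [Nat.lt_succ_iff] using hr
  simp only [PowerSeries.coeff_rescale, Fs, PowerSeries.coeff_mk]
  have : z ^ ((n : ℤ) - 2 * r) = z⁻¹ ^ r * z ^ (n - r) := by
    obtain ⟨s, rfl⟩ := Nat.exists_eq_add_of_le hr'
    rw [Nat.add_sub_cancel_left, ← zpow_natCast, ← zpow_natCast, _root_.inv_zpow', ← zpow_add₀ hz]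
    congr 1; push_cast; ring
  rw [this]
  simp only [div_eq_mul_inv, mul_inv]
  ring

lemma exists_z (x : ℂ) : ∃ z : ℂ, z ≠ 0 ∧ x = (z + z⁻¹) / 2 := by
  obtain ⟨s, hs⟩ := IsAlgClosed.exists_pow_nat_eq (x ^ 2 - 1) (n := 2) (by norm_num)
  have h : (x + s) * (x - s) = 1 := by linear_combination -hs
  have h0 : x + s ≠ 0 := left_ne_zero_of_mul_eq_one h
  refine ⟨x + s, h0, ?_⟩
  rw [inv_eq_of_mul_eq_one_right h]; ring

lemma qp_ne (q : ℝ) (hq0 : 0 < q) (hq1 : q < 1) (n : ℕ) :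
    qp ((q : ℂ) ^ 2) ((q : ℂ) ^ 2) n ≠ 0 := by
  unfold qp
  rw [Finset.prod_ne_zero_iff]
  intro j _ h
  have h2 : (q ^ 2) * (q ^ 2) ^ j = 1 := by
    have := (sub_eq_zero.mp h).symm
    exact_mod_cast this
  rw [← pow_succ'] at h2
  have h3 : (q ^ 2) ^ (j + 1) < 1 := pow_lt_one₀ (by positivity) (by nlinarith) (by omega)
  linarith

lemma Linv_mul (q : ℝ) (hq0 : 0 < q) (hq1 : q < 1) (L : ℕ)
    (C : ℂ → ℂ → ℕ → Polynomial ℂ) (hC : IsUltra C) (x : ℂ) :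
    Linv (q : ℂ) L C x * Lm (q : ℂ) L C x = 1 := by
  obtain ⟨z, hz, rfl⟩ := exists_z x
  have hq : (q : ℂ) ≠ 0 := by exact_mod_cast hq0.ne'
  have hp := qp_ne q hq0 hq1
  have hp0 : (q : ℂ) ^ 2 ≠ 0 := pow_ne_zero _ hq
  ext ⟨m, hm⟩ ⟨n, hn⟩
  simp only [Matrix.mul_apply, Linv, Lm, Matrix.of_apply, ultra_eval C hC _ _ z hz]
  rw [Matrix.one_apply]
  simp only [Fin.mk.injEq]
  generalize hQ : (q : ℂ) = Q at *
  rw [Fin.sum_univ_eq_sum_range (fun k => (if k ≤ m then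
      Q ^ ((2 * ((m : ℕ) : ℤ) + 1) * (((m : ℕ) : ℤ) - ((k : ℕ) : ℤ))) *
          qp (Q ^ 2) (Q ^ 2) (m : ℕ) * qp (Q ^ 2) (Q ^ 2) ((m : ℕ) + (k : ℕ)) /
          (qp (Q ^ 2) (Q ^ 2) (2 * (m : ℕ)) * qp (Q ^ 2) (Q ^ 2) (k : ℕ)) *
        PowerSeries.coeff (m - k) (Gs (Q ^ 2) z (Q ^ (-(2 * (m : ℤ)))))
    else 0) * (if n ≤ k then
      Q ^ (((k : ℕ) : ℤ) - ((n : ℕ) : ℤ)) * qp (Q ^ 2) (Q ^ 2) (k : ℕ) *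
          qp (Q ^ 2) (Q ^ 2) (2 * (n : ℕ) + 1) /
          (qp (Q ^ 2) (Q ^ 2) ((k : ℕ) + (n : ℕ) + 1) * qp (Q ^ 2) (Q ^ 2) (n : ℕ)) *
        PowerSeries.coeff (k - n) (Gs (Q ^ 2) z (Q ^ (2 * n + 2)))
    else 0)) (L + 1)]
  have hc0 : ∀ β, PowerSeries.coeff 0 (Gs (Q ^ 2) z β) = 1 := by
    intro β
    rw [Gs, PowerSeries.coeff_mul, Finset.Nat.sum_antidiagonal_eq_sum_range_succ_mk]
    simp [PowerSeries.coeff_rescale, Fs, qp, -PowerSeries.coeff_zero_eq_constantCoeff]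
  rcases lt_trichotomy m n with h | h | h
  · rw [if_neg (by omega)]
    apply Finset.sum_eq_zero
    intro k _
    by_cases h1 : k ≤ m
    · rw [if_neg (show ¬ n ≤ k by omega), mul_zero]
    · rw [if_neg h1, zero_mul]
  · subst h
    rw [if_pos rfl, Finset.sum_eq_single m]
    · rw [if_pos le_rfl, if_pos le_rfl, Nat.sub_self, hc0, hc0]
      have e : m + m = 2 * m := by ring
      rw [e, sub_self, mul_zero, zpow_zero]
      have h1 := hp m
      have h2 := hp (2 * m)
      have h3 := hp (2 * m + 1)
      field_simp
    · intro k _ hk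
      by_cases h1 : k ≤ m
      · rw [if_neg (show ¬ m ≤ k by omega), mul_zero]
      · rw [if_neg h1, zero_mul]
    · intro h; exact absurd (Finset.mem_range.mpr hm) h
  · rw [if_neg (by omega)]
    obtain ⟨M, rfl⟩ : ∃ M, m = n + 1 + M := ⟨m - n - 1, by omega⟩
    have hk := key (Q ^ 2) z hp hp0 hz (n + 1) M
    rw [← Finset.sum_subset (s₁ := Finset.Ico n (n + 1 + M + 1))]
    · rw [Finset.sum_Ico_eq_sum_range, show n + 1 + M + 1 - n = M + 2 by omega]
      rw [← mul_zero (Q ^ (M + 1) * qp (Q ^ 2) (Q ^ 2) (n + 1 + M) * qp (Q ^ 2) (Q ^ 2) (2 * n + 1) /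
        (qp (Q ^ 2) (Q ^ 2) (2 * (n + 1 + M)) * qp (Q ^ 2) (Q ^ 2) n)), ← hk, Finset.mul_sum]
      apply Finset.sum_congr rfl
      intro j hj
      have hj' : j ≤ M + 1 := by have := Finset.mem_range.mp hj; omega
      obtain ⟨r, hr⟩ := Nat.exists_eq_add_of_le hj'
      rw [if_pos (by omega), if_pos (by omega), show n + 1 + M - (n + j) = r by omega,
        show n + j - n = j by omega, show M + 1 - j = r by omega,
        show n + 1 + M + (n + j) = (n + j + n + 1) + M by omega, qp_add _ _ (n + j + n + 1) M]
      have e1 : Q ^ 2 * (Q ^ 2) ^ (n + j + n + 1) = ((Q ^ 2) ^ (n + 1)) ^ 2 * (Q ^ 2) ^ j := by ring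
      have e2 : Q ^ (-(2 * ((n + 1 + M : ℕ) : ℤ))) = ((Q ^ 2) ^ (n + 1 + M))⁻¹ := by
        rw [_root_.zpow_neg, ← pow_mul]; norm_cast
      have e3 : Q ^ (2 * n + 2) = (Q ^ 2) ^ (n + 1) := by ring
      have e4 : Q ^ ((2 * ((n + 1 + M : ℕ) : ℤ) + 1) * (((n + 1 + M : ℕ) : ℤ) - ((n + j : ℕ) : ℤ)))
          = ((Q ^ 2) ^ (n + 1 + M)) ^ r * Q ^ r := by
        rw [show ((n + 1 + M : ℕ) : ℤ) - ((n + j : ℕ) : ℤ) = (r : ℤ) by omega]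
        rw [show ((2 * ((n + 1 + M : ℕ) : ℤ) + 1) * (r : ℤ)) = ((2 * (n + 1 + M) + 1) * r : ℕ) by
          push_cast; ring, zpow_natCast]
        ring
      have e5 : Q ^ (((n + j : ℕ) : ℤ) - (n : ℤ)) = Q ^ j := by
        rw [← zpow_natCast]; congr 1; push_cast; ring
      rw [e1, e2, e3, e4, e5, hr, pow_add Q j r]
      have h1 := hp (n + j)
      have h2 := hp (n + j + n + 1)
      have h3 := hp n
      have h4 := hp (2 * (n + 1 + M))
      generalize PowerSeries.coeff r (Gs (Q ^ 2) z ((Q ^ 2) ^ (n + 1 + M))⁻¹) = X1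
      generalize PowerSeries.coeff j (Gs (Q ^ 2) z ((Q ^ 2) ^ (n + 1))) = X2
      field_simp
    · intro k hk
      rw [Finset.mem_Ico] at hk
      rw [Finset.mem_range]; omega
    · intro k _ hk
      rw [Finset.mem_Ico] at hk
      by_cases h1 : k ≤ n + 1 + M
      · rw [if_neg (show ¬ n ≤ k by omega), mul_zero]
      · rw [if_neg h1, zero_mul]

/-- the explicit matrix `M(x)` (here `Linv`) with entries built from
continuous q-ultraspherical polynomials with parameter `q^{-2k}` is the inverse of
`L(x)`: `L(x) M(x) = I` for every `x`. -/
theorem stmt8 (q : ℝ) (hq0 : 0 < q) (hq1 : q < 1) (L : ℕ)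
    (C : ℂ → ℂ → ℕ → Polynomial ℂ) (hC : IsUltra C) :
    ∀ x : ℂ, Lm (q : ℂ) L C x * Linv (q : ℂ) L C x = 1 := by
  intro x
  exact mul_eq_one_comm.mp (Linv_mul q hq0 hq1 L C hC x)

end
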